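/- Let Λ be a compact invariant set with the weak specification property for a flow, σ a hyperbolic singularity in Λ and O(q) a hyperbolic periodic orbit in Λ. Then W^u(σ) ∩ W^s(O(q)) ≠ ∅. -/

import Mathlib

open Filter Set Metric TensorProduct

section Defs
variable {M : Type*}

/-- A continuous flow on a topological space. -/
def IsFlow [TopologicalSpace M] (φ : ℝ → M → M) : Prop :=
  Continuous (fun p : ℝ × M => φ p.1 p.2) ∧ (∀ x, φ 0 x = x) ∧
    ∀ s t x, φ (s + t) x = φ s (φ t x)

def InvariantSet (φ : ℝ → M → M) (Λ : Set M) : Prop :=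
  ∀ t : ℝ, ∀ x ∈ Λ, φ t x ∈ Λ

def orbitOf (φ : ℝ → M → M) (p : M) : Set M := Set.range fun t : ℝ => φ t p

/-- A critical point: singularity or periodic point. -/
def IsCriticalPt (φ : ℝ → M → M) (p : M) : Prop := ∃ T : ℝ, 0 < T ∧ φ T p = p

/-- `K` is a spacing constant for `ε`: any `K`-spaced weak specification
(two orbit segments of points of `Λ`, parametrized over `[a₁,b₁]` and `[a₂,b₂]`
with `a₂ ≥ b₁ + K`) is `ε`-shadowed by a point of `Λ`. -/
def SpecConst [MetricSpace M] (φ : ℝ → M → M) (Λ : Set M) (ε K : ℝ) : Prop :=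
  ∀ a₁ b₁ a₂ b₂ : ℝ, a₁ ≤ b₁ → a₂ ≤ b₂ → b₁ + K ≤ a₂ →
    ∀ x ∈ Λ, ∀ y ∈ Λ, ∃ z ∈ Λ,
      (∀ t ∈ Set.Icc a₁ b₁, dist (φ t z) (φ (t - a₁) x) < ε) ∧
      (∀ t ∈ Set.Icc a₂ b₂, dist (φ t z) (φ (t - a₂) y) < ε)

/-- The weak specification property on `Λ`. -/
def WeakSpec [MetricSpace M] (φ : ℝ → M → M) (Λ : Set M) : Prop :=
  ∀ ε : ℝ, 0 < ε → ∃ K : ℝ, 0 < K ∧ SpecConst φ Λ ε K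

/-- Topological mixing of the flow restricted to `Λ`. -/
def TopMixingOn [TopologicalSpace M] (φ : ℝ → M → M) (Λ : Set M) : Prop :=
  ∀ U V : Set M, IsOpen U → IsOpen V → (U ∩ Λ).Nonempty → (V ∩ Λ).Nonempty →
    ∃ N : ℝ, 0 < N ∧ ∀ t : ℝ, N ≤ t → (φ t '' (V ∩ Λ) ∩ (U ∩ Λ)).Nonempty

/-- Topological transitivity of the flow restricted to `Λ`. -/
def TopTransOn [TopologicalSpace M] (φ : ℝ → M → M) (Λ : Set M) : Prop :=
  ∀ U V : Set M, IsOpen U → IsOpen V → (U ∩ Λ).Nonempty → (V ∩ Λ).Nonempty →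
    ∃ t : ℝ, 0 < t ∧ (φ t '' (V ∩ Λ) ∩ (U ∩ Λ)).Nonempty

/-- The stable set `W^s(σ)` of a point (e.g. a singularity). -/
def WsPoint [TopologicalSpace M] (φ : ℝ → M → M) (σ : M) : Set M :=
  {y | Filter.Tendsto (fun t : ℝ => φ t y) Filter.atTop (nhds σ)}

/-- The unstable set `W^u(σ)` of a point (e.g. a singularity). -/
def WuPoint [TopologicalSpace M] (φ : ℝ → M → M) (σ : M) : Set M :=
  {y | Filter.Tendsto (fun t : ℝ => φ t y) Filter.atBot (nhds σ)}

/-- The strong stable set `W^{ss}(p)`. -/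
def Wss [MetricSpace M] (φ : ℝ → M → M) (p : M) : Set M :=
  {y | Filter.Tendsto (fun t : ℝ => dist (φ t y) (φ t p)) Filter.atTop (nhds 0)}

/-- The strong unstable set `W^{uu}(p)`. -/
def Wuu [MetricSpace M] (φ : ℝ → M → M) (p : M) : Set M :=
  {y | Filter.Tendsto (fun t : ℝ => dist (φ t y) (φ t p)) Filter.atBot (nhds 0)}

/-- The stable set of the orbit of `p`: `W^s(O(p)) = ⋃_t W^{ss}(X_t(p))`. -/
def WsOrb [MetricSpace M] (φ : ℝ → M → M) (p : M) : Set M := ⋃ s : ℝ, Wss φ (φ s p)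

/-- The unstable set of the orbit of `p`. -/
def WuOrb [MetricSpace M] (φ : ℝ → M → M) (p : M) : Set M := ⋃ s : ℝ, Wuu φ (φ s p)

end Defs

section VF
variable {E : Type*} [NormedAddCommGroup E] [NormedSpace ℝ E]

/-- `φ` is the flow generated by the vector field `X`. -/
def GeneratedBy (X : E → E) (φ : ℝ → E → E) : Prop :=
  (∀ x, φ 0 x = x) ∧ (∀ s t x, φ (s + t) x = φ s (φ t x)) ∧
    ∀ x t, HasDerivAt (fun s => φ s x) (X (φ t x)) t

/-- The complexification of a continuous real-linear endomorphism. -/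
noncomputable def cxEnd (A : E →L[ℝ] E) : Module.End ℂ (ℂ ⊗[ℝ] E) :=
  (A : E →ₗ[ℝ] E).baseChange ℂ

/-- A hyperbolic singularity: `X σ = 0` and no eigenvalue of `DX(σ)` has zero real part. -/
def HypSing (X : E → E) (σ : E) : Prop :=
  X σ = 0 ∧ ∀ μ ∈ spectrum ℂ (cxEnd (fderiv ℝ X σ)), μ.re ≠ 0

/-- A hyperbolic periodic point: a regular point of period `T > 0` such that no
characteristic multiplier (eigenvalue of `Dφ_T(p)` other than the simple eigenvalue `1`
coming from the flow direction) lies on the unit circle. -/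
def HypPeriodic (X : E → E) (φ : ℝ → E → E) (p : E) : Prop :=
  X p ≠ 0 ∧ ∃ T : ℝ, 0 < T ∧ φ T p = p ∧
    (∀ μ ∈ spectrum ℂ (cxEnd (fderiv ℝ (φ T) p)), μ = 1 ∨ ‖μ‖ ≠ 1) ∧
    Module.finrank ℂ (Module.End.maxGenEigenspace (cxEnd (fderiv ℝ (φ T) p)) 1) = 1

/-- A hyperbolic critical element: hyperbolic singularity or hyperbolic periodic point. -/
def HypCritical (X : E → E) (φ : ℝ → E → E) (p : E) : Prop :=
  HypSing X p ∨ HypPeriodic X φ p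

/-- A hyperbolic periodic orbit of saddle type: it has characteristic multipliers both
inside and outside the unit circle. -/
def IsSaddlePeriodic (X : E → E) (φ : ℝ → E → E) (p : E) : Prop :=
  X p ≠ 0 ∧ ∃ T : ℝ, 0 < T ∧ φ T p = p ∧
    (∃ μ ∈ spectrum ℂ (cxEnd (fderiv ℝ (φ T) p)), ‖μ‖ < 1) ∧
    (∃ μ ∈ spectrum ℂ (cxEnd (fderiv ℝ (φ T) p)), 1 < ‖μ‖)

/-- `Crit(X)`: singularities together with periodic points. -/
def CritSet (X : E → E) (φ : ℝ → E → E) : Set E :=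
  {x | X x = 0 ∨ ∃ T : ℝ, 0 < T ∧ φ T x = x}

/-- `PO(X)`: the (regular) periodic points. -/
def PerPts (X : E → E) (φ : ℝ → E → E) : Set E :=
  {x | X x ≠ 0 ∧ ∃ T : ℝ, 0 < T ∧ φ T x = x}

end VF

/-!
Weak specification and compactness of closed balls give a point `z` whose backward orbit stays
within `ε` of `σ` and whose forward orbit, from some time `K` on, stays within `ε` of the orbit of
`q`. It remains to see that, for small `ε`, hyperbolicity turns staying close into converging.

Near `σ`, the displacement `y` from `σ` in reversed time satisfies `‖y' - A y‖ ≤ κ ‖y‖` with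
`A = -DX(σ)` and `κ` small. As `A` has no imaginary eigenvalue, a bounded `y` with eventually
`‖y' - A y‖ ≤ G` is eventually bounded by `C G`; with `κ C ≤ 1 / 2` the bound on `y` can be halved
again and again.

Near `q`, let `l` be the left eigenvector of `B = Dφ_T(q)` for the simple eigenvalue `1`,
normalized by `l (X q) = 1`. Sliding the points `φ (n T) z` along the flow onto the section
`l = l q` gives displacements `y n ∈ ker l` with `‖y (n + 1) - B (y n)‖ ≤ κ ‖y n‖`. The eigenvalues
of `B` on `ker l` lie off the unit circle, so `∑ ‖y n‖ < ∞`. The increments of the sliding times are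
of the order of `‖y n‖`, so these times converge, and their limit is the asymptotic phase.
-/

section PeriodicPoint

variable {M : Type*} [MetricSpace M] {φ : ℝ → M → M} {x q : M} {T : ℝ}

theorem IsFlow.apply_nat_mul_eq_self (hflow : IsFlow φ) (hq : φ T q = q) (n : ℕ) :
    φ (n * T) q = q := by
  induction n with
  | zero => simp [hflow.2.1]
  | succ n ih => rw [Nat.cast_succ, add_one_mul, hflow.2.2, hq, ih]

theorem IsFlow.eventually_forall_dist_lt (hflow : IsFlow φ) {ε : ℝ} (hε : 0 < ε) {I : Set ℝ}
    (hI : IsCompact I) (q : M) : ∀ᶠ x in nhds q, ∀ t ∈ I, dist (φ t x) (φ t q) < ε := by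
  refine hI.eventually_forall_of_forall_eventually (P := fun x t => dist (φ t x) (φ t q) < ε)
    fun t _ => ?_
  have hcont : Continuous fun p : M × ℝ => dist (φ p.2 p.1) (φ p.2 q) :=
    (hflow.1.comp continuous_swap).dist (hflow.1.comp (continuous_snd.prodMk continuous_const))
  exact hcont.continuousAt.eventually_lt_const (by simpa using hε)

theorem IsFlow.mem_wss_of_tendsto_nat_mul (hflow : IsFlow φ) (hT : 0 < T) (hq : φ T q = q)
    (hx : Tendsto (fun n : ℕ => φ (n * T) x) atTop (nhds q)) : x ∈ Wss φ q := by
  refine Metric.tendsto_nhds.2 fun ε hε => ?_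
  have hfloor : Tendsto (fun t : ℝ => ⌊t / T⌋₊) atTop atTop :=
    tendsto_nat_floor_atTop.comp (tendsto_id.atTop_div_const hT)
  have hnear := hfloor.eventually
    (hx.eventually (hflow.eventually_forall_dist_lt hε (isCompact_Icc (a := 0) (b := T)) q))
  filter_upwards [hnear, eventually_ge_atTop 0] with t ht ht₀
  have hle : ⌊t / T⌋₊ * T ≤ t := (le_div_iff₀ hT).1 (Nat.floor_le (div_nonneg ht₀ hT.le))
  have hlt : t < (⌊t / T⌋₊ + 1) * T := (div_lt_iff₀ hT).1 (Nat.lt_floor_add_one _)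
  have hrem := ht (t - ⌊t / T⌋₊ * T) ⟨by linarith, by linarith⟩
  nth_rewrite 1 [← hflow.apply_nat_mul_eq_self hq ⌊t / T⌋₊] at hrem
  rw [← hflow.2.2, ← hflow.2.2, sub_add_cancel] at hrem
  simpa using hrem

theorem IsFlow.mem_wsOrb_of_apply_mem (hflow : IsFlow φ) {s : ℝ} (hx : φ s x ∈ WsOrb φ q) :
    x ∈ WsOrb φ q := by
  obtain ⟨r, hr⟩ := mem_iUnion.1 hx
  refine mem_iUnion.2 ⟨r - s, ?_⟩
  refine (Tendsto.comp hr (tendsto_atTop_add_const_right _ (-s) tendsto_id)).congr fun t => ?_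
  simp only [Function.comp_apply, id_eq, ← hflow.2.2]
  congr 2 <;> ring_nf

theorem IsFlow.exists_tendsto_nat_mul_of_summable (hflow : IsFlow φ) {s : ℕ → ℝ}
    (hs : Summable fun n => |s (n + 1) - s n|)
    (hx : Tendsto (fun n : ℕ => φ (s n) (φ (n * T) x)) atTop (nhds q)) :
    ∃ S, Tendsto (fun n : ℕ => φ (n * T) (φ S x)) atTop (nhds q) := by
  obtain ⟨S, hS⟩ := cauchySeq_tendsto_of_complete
    (cauchySeq_of_summable_dist (f := s) (by
      simpa only [Real.dist_eq, abs_sub_comm, Nat.succ_eq_add_one] using hs))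
  refine ⟨S, ?_⟩
  have hlim : Tendsto (fun n : ℕ => φ (S - s n) (φ (s n) (φ (n * T) x))) atTop
      (nhds (φ (S - S) q)) :=
    (hflow.1.tendsto (S - S, q)).comp ((tendsto_const_nhds.sub hS).prodMk_nhds hx)
  rw [sub_self, hflow.2.1] at hlim
  refine hlim.congr fun n => ?_
  rw [← hflow.2.2, ← hflow.2.2, ← hflow.2.2]
  ring_nf

end PeriodicPoint

section HyperbolicLinear

open Polynomial in
theorem forall_of_forall_apply_sub_smul_imp {K V : Type*} [Field K] [IsAlgClosed K]
    [AddCommGroup V] [Module K V] [FiniteDimensional K V] (f : Module.End K V) {P : V → Prop}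
    (zero : P 0) (step : ∀ μ ∈ spectrum K f, ∀ v, P (f v - μ • v) → P v) (v : V) : P v := by
  have descend : ∀ s : Multiset K, (∀ μ ∈ s, μ ∈ spectrum K f) →
      ∀ v, P (aeval f (s.map fun μ => X - C μ).prod v) → P v := by
    intro s hs
    induction s using Multiset.induction_on with
    | empty => simp
    | cons μ s ih =>
      rw [Multiset.forall_mem_cons] at hs
      refine fun v hv => step μ hs.1 v (ih hs.2 _ ?_)
      rw [Multiset.map_cons, Multiset.prod_cons, mul_comm, map_mul, Module.End.mul_apply] at hv
      simpa using hv
  refine descend f.charpoly.roots (fun μ hμ => ?_) v ?_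
  · exact (Module.End.mem_spectrum_iff_isRoot_charpoly _ _).2 (isRoot_of_mem_roots hμ)
  · rwa [← (IsAlgClosed.splits f.charpoly).eq_prod_roots_of_monic f.charpoly_monic,
      LinearMap.aeval_self_charpoly, LinearMap.zero_apply]

variable {E : Type*} [NormedAddCommGroup E] [NormedSpace ℝ E]

theorem spectrum_lcomp_subset_spectrum_cxEnd [FiniteDimensional ℝ E] (A : E →L[ℝ] E) :
    spectrum ℂ (LinearMap.lcomp ℂ ℂ (A : E →ₗ[ℝ] E)) ⊆ spectrum ℂ (cxEnd A) := by
  intro μ hμ hres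
  obtain ⟨l, hl, hl0⟩ := (Module.End.hasEigenvalue_iff_mem_spectrum.2 hμ).exists_hasEigenvector
  rw [Module.End.mem_eigenspace_iff] at hl
  have hvanish : ∀ w, l.liftBaseChange ℂ ((algebraMap ℂ _ μ - cxEnd A) w) = 0 := by
    intro w
    induction w with
    | zero => simp
    | add w₁ w₂ h₁ h₂ => rw [map_add, map_add, h₁, h₂, add_zero]
    | tmul c x =>
      have hx : l (A x) = μ * l x := LinearMap.congr_fun hl x
      simp [cxEnd, hx, TensorProduct.smul_tmul', mul_left_comm, mul_assoc]
  refine hl0 (LinearMap.ext fun x => ?_)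
  obtain ⟨w, hw⟩ := ((Module.End.isUnit_iff _).1 hres).surjective (1 ⊗ₜ x)
  simpa [hw] using hvanish w

-- This replaces triangularization: along a solution of `y' = A y + g` or
-- `y (n + 1) = A (y n) + g n`, the scalar `l y` obeys the equation of the eigenvalue `μ`, forced by
-- `(l ∘ A - μ l) y` and `l g`.
theorem forall_functional_of_forall_comp_sub_smul_imp [FiniteDimensional ℝ E] (A : E →L[ℝ] E)
    {P : (E →ₗ[ℝ] ℂ) → Prop} (zero : P 0)
    (step : ∀ μ ∈ spectrum ℂ (cxEnd A), ∀ l, P (l ∘ₗ (A : E →ₗ[ℝ] E) - μ • l) → P l)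
    (l : E →ₗ[ℝ] ℂ) : P l :=
  forall_of_forall_apply_sub_smul_imp (LinearMap.lcomp ℂ ℂ (A : E →ₗ[ℝ] E)) zero
    (fun μ hμ => step μ (spectrum_lcomp_subset_spectrum_cxEnd A hμ)) l

theorem exists_norm_le_sum_norm_functional (E : Type*) [NormedAddCommGroup E] [NormedSpace ℝ E]
    [FiniteDimensional ℝ E] :
    ∃ l : Fin (Module.finrank ℝ E) → E →ₗ[ℝ] ℂ, ∀ x, ‖x‖ ≤ ∑ i, ‖l i x‖ := by
  let b := Module.finBasis ℝ E
  refine ⟨fun i => (‖b i‖ : ℂ) • Complex.ofRealCLM.toLinearMap ∘ₗ b.coord i, fun x => ?_⟩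
  calc ‖x‖ = ‖∑ i, b.repr x i • b i‖ := by rw [b.sum_repr]
    _ ≤ ∑ i, ‖b.repr x i • b i‖ := norm_sum_le _ _
    _ = _ := Finset.sum_congr rfl fun i _ => by simp [norm_smul, mul_comm]

theorem sum_norm_le_of_bounded_linear_recurrence {μ : ℂ} (hμ : ‖μ‖ ≠ 1) {u h : ℕ → ℂ} {M : ℝ}
    (hu : ∀ n, u (n + 1) = μ * u n + h n) (hM : ∀ n, ‖u n‖ ≤ M) (N : ℕ) :
    ∑ n ∈ Finset.range N, ‖u n‖ ≤ |‖μ‖ - 1|⁻¹ * (M + ∑ n ∈ Finset.range N, ‖h n‖) := by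
  have hμ' : 0 < |‖μ‖ - 1| := abs_pos.2 (sub_ne_zero.2 hμ)
  have shift : ∑ n ∈ Finset.range N, ‖u (n + 1)‖ + ‖u 0‖
      = ∑ n ∈ Finset.range N, ‖u n‖ + ‖u N‖ := by
    rw [← Finset.sum_range_succ' (fun n => ‖u n‖), Finset.sum_range_succ]
  have upper : ∑ n ∈ Finset.range N, ‖u (n + 1)‖
      ≤ ‖μ‖ * ∑ n ∈ Finset.range N, ‖u n‖ + ∑ n ∈ Finset.range N, ‖h n‖ := by
    rw [Finset.mul_sum, ← Finset.sum_add_distrib]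
    refine Finset.sum_le_sum fun n _ => ?_
    rw [hu, ← norm_mul]
    exact norm_add_le _ _
  have lower : ‖μ‖ * ∑ n ∈ Finset.range N, ‖u n‖
      ≤ ∑ n ∈ Finset.range N, ‖u (n + 1)‖ + ∑ n ∈ Finset.range N, ‖h n‖ := by
    rw [Finset.mul_sum, ← Finset.sum_add_distrib]
    refine Finset.sum_le_sum fun n _ => ?_
    rw [← norm_mul, ← sub_eq_of_eq_add (hu n)]
    exact norm_sub_le _ _
  rw [inv_mul_eq_div, le_div_iff₀ hμ']
  rcases abs_cases (‖μ‖ - 1) with ⟨habs, _⟩ | ⟨habs, _⟩ <;> rw [habs] <;>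
    linarith [hM 0, hM N, norm_nonneg (u 0), norm_nonneg (u N)]

theorem exists_sum_norm_functional_le [FiniteDimensional ℝ E] (B : E →L[ℝ] E)
    (hB : ∀ μ ∈ spectrum ℂ (cxEnd B), ‖μ‖ ≠ 1) (l : E →ₗ[ℝ] ℂ) :
    ∃ C, ∀ (y : ℕ → E) (M : ℝ), (∀ n, ‖y n‖ ≤ M) → ∀ N,
      ∑ n ∈ Finset.range N, ‖l (y n)‖
        ≤ C * (M + ∑ n ∈ Finset.range N, ‖y (n + 1) - B (y n)‖) := by
  induction l using forall_functional_of_forall_comp_sub_smul_imp B with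
  | zero => exact ⟨0, by simp⟩
  | step μ hμ l ih =>
    obtain ⟨C, hC⟩ := ih
    set c := ‖LinearMap.toContinuousLinearMap l‖
    have hl : ∀ x, ‖l x‖ ≤ c * ‖x‖ := (LinearMap.toContinuousLinearMap l).le_opNorm
    refine ⟨|‖μ‖ - 1|⁻¹ * (c + C), fun y M hM N => ?_⟩
    have hrec : ∀ n, l (y (n + 1)) = μ * l (y n)
        + ((l ∘ₗ (B : E →ₗ[ℝ] E) - μ • l) (y n) + l (y (n + 1) - B (y n))) := by
      intro n; simp
    have hbound : ∀ n, ‖l (y n)‖ ≤ c * M := fun n => (hl _).trans (by gcongr; exact hM n)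
    refine (sum_norm_le_of_bounded_linear_recurrence (hB μ hμ) hrec hbound N).trans ?_
    rw [mul_assoc]
    gcongr
    calc c * M + ∑ n ∈ Finset.range N,
          ‖(l ∘ₗ (B : E →ₗ[ℝ] E) - μ • l) (y n) + l (y (n + 1) - B (y n))‖
        ≤ c * M + ∑ n ∈ Finset.range N,
          (‖(l ∘ₗ (B : E →ₗ[ℝ] E) - μ • l) (y n)‖ + c * ‖y (n + 1) - B (y n)‖) := by
          gcongr
          exact (norm_add_le _ _).trans (by gcongr; exact hl _)
      _ ≤ (c + C) * (M + ∑ n ∈ Finset.range N, ‖y (n + 1) - B (y n)‖) := by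
          rw [Finset.sum_add_distrib, ← Finset.mul_sum]
          linarith [hC y M hM N]

theorem exists_sum_norm_le [FiniteDimensional ℝ E] (B : E →L[ℝ] E)
    (hB : ∀ μ ∈ spectrum ℂ (cxEnd B), ‖μ‖ ≠ 1) :
    ∃ C, 0 < C ∧ ∀ (y : ℕ → E) (M : ℝ), (∀ n, ‖y n‖ ≤ M) → ∀ N,
      ∑ n ∈ Finset.range N, ‖y n‖
        ≤ C * (M + ∑ n ∈ Finset.range N, ‖y (n + 1) - B (y n)‖) := by
  obtain ⟨l, hl⟩ := exists_norm_le_sum_norm_functional E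
  choose C hC using fun i => exists_sum_norm_functional_le B hB (l i)
  refine ⟨max 1 (∑ i, C i), by positivity, fun y M hM N => ?_⟩
  have hM0 : 0 ≤ M := (norm_nonneg _).trans (hM 0)
  calc ∑ n ∈ Finset.range N, ‖y n‖
      ≤ ∑ n ∈ Finset.range N, ∑ i, ‖l i (y n)‖ := Finset.sum_le_sum fun n _ => hl _
    _ = ∑ i, ∑ n ∈ Finset.range N, ‖l i (y n)‖ := Finset.sum_comm
    _ ≤ ∑ i, C i * (M + ∑ n ∈ Finset.range N, ‖y (n + 1) - B (y n)‖) :=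
        Finset.sum_le_sum fun i _ => hC i y M hM N
    _ = (∑ i, C i) * (M + ∑ n ∈ Finset.range N, ‖y (n + 1) - B (y n)‖) := by
        rw [Finset.sum_mul]
    _ ≤ _ := by gcongr; exact le_max_right _ _

theorem exists_summable_norm_of_norm_sub_le [FiniteDimensional ℝ E] (B : E →L[ℝ] E)
    (hB : ∀ μ ∈ spectrum ℂ (cxEnd B), ‖μ‖ ≠ 1) :
    ∃ κ, 0 < κ ∧ ∀ y : ℕ → E, (∃ M, ∀ n, ‖y n‖ ≤ M) →
      (∀ n, ‖y (n + 1) - B (y n)‖ ≤ κ * ‖y n‖) → Summable fun n => ‖y n‖ := by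
  obtain ⟨C, hC, hsum⟩ := exists_sum_norm_le B hB
  refine ⟨(2 * C)⁻¹, by positivity, fun y ⟨M, hM⟩ hy => ?_⟩
  refine summable_of_sum_range_le (c := 2 * (C * M)) (fun n => norm_nonneg _) fun N => ?_
  have herr : ∑ n ∈ Finset.range N, ‖y (n + 1) - B (y n)‖
      ≤ (2 * C)⁻¹ * ∑ n ∈ Finset.range N, ‖y n‖ := by
    rw [Finset.mul_sum]
    exact Finset.sum_le_sum fun n _ => hy n
  have habsorb : C * (M + (2 * C)⁻¹ * ∑ n ∈ Finset.range N, ‖y n‖)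
      = C * M + (∑ n ∈ Finset.range N, ‖y n‖) / 2 := by
    field_simp
  have := (hsum y M hM N).trans (mul_le_mul_of_nonneg_left (add_le_add_right herr M) hC.le)
  linarith

end HyperbolicLinear

section HyperbolicODE

-- Duhamel's formula; the right-hand side is the integral of `H e ^ (-re μ (x - t))` over `[t, s]`.
theorem norm_exp_neg_mul_sub_le {μ : ℂ} (hμ : μ.re ≠ 0) {u h : ℝ → ℂ} {t s H : ℝ} (hts : t ≤ s)
    (hu : ∀ x ∈ Icc t s, HasDerivAt u (μ * u x + h x) x) (hH : ∀ x ∈ Icc t s, ‖h x‖ ≤ H) :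
    ‖Complex.exp (-μ * (s - t : ℝ)) * u s - u t‖
      ≤ H / μ.re * (1 - Real.exp (-μ.re * (s - t))) := by
  have hexp : ∀ x, HasDerivAt (fun x : ℝ => Complex.exp (-μ * (x - t : ℝ)))
      (Complex.exp (-μ * (x - t : ℝ)) * (-μ * 1)) x := fun x =>
    (((hasDerivAt_id x).sub_const t).ofReal_comp.const_mul (-μ)).cexp
  have hv : ∀ x ∈ Icc t s, HasDerivAt (fun x : ℝ => Complex.exp (-μ * (x - t : ℝ)) * u x - u t)
      (Complex.exp (-μ * (x - t : ℝ)) * h x) x := fun x hx =>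
    (((hexp x).mul (hu x hx)).sub_const (u t)).congr_deriv (by ring)
  have hbound : ∀ x, HasDerivAt (fun x => H / μ.re * (1 - Real.exp (-μ.re * (x - t))))
      (H * Real.exp (-μ.re * (x - t))) x := by
    intro x
    refine (((((hasDerivAt_id x).sub_const t).const_mul (-μ.re)).exp.const_sub 1).const_mul
      (H / μ.re)).congr_deriv ?_
    simp only [id_eq]
    field_simp
  refine image_norm_le_of_norm_deriv_right_le_deriv_boundary
    (fun x hx => (hv x hx).continuousAt.continuousWithinAt)
    (fun x hx => (hv x (Ico_subset_Icc_self hx)).hasDerivWithinAt) (by simp) hbound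
    (fun x hx => ?_) ⟨hts, le_rfl⟩
  rw [norm_mul, Complex.norm_exp, mul_comm, Complex.re_mul_ofReal, Complex.neg_re]
  gcongr
  exact hH x (Ico_subset_Icc_self hx)

theorem norm_exp_neg_mul_mul (μ z : ℂ) (r : ℝ) :
    ‖Complex.exp (-μ * r) * z‖ = Real.exp (-μ.re * r) * ‖z‖ := by
  rw [norm_mul, Complex.norm_exp, Complex.re_mul_ofReal, Complex.neg_re]

theorem norm_left_le_of_linear_ode {μ : ℂ} (hμ : 0 < μ.re) {u h : ℝ → ℂ} {t s H : ℝ} (hts : t ≤ s)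
    (hu : ∀ x ∈ Icc t s, HasDerivAt u (μ * u x + h x) x) (hH : ∀ x ∈ Icc t s, ‖h x‖ ≤ H) :
    ‖u t‖ ≤ Real.exp (-μ.re * (s - t)) * ‖u s‖ + H / μ.re := by
  have hH0 : 0 ≤ H := (norm_nonneg _).trans (hH t ⟨le_rfl, hts⟩)
  calc ‖u t‖ ≤ ‖Complex.exp (-μ * (s - t : ℝ)) * u s‖
        + ‖Complex.exp (-μ * (s - t : ℝ)) * u s - u t‖ := norm_le_norm_add_norm_sub _ _
    _ ≤ Real.exp (-μ.re * (s - t)) * ‖u s‖ + H / μ.re * (1 - Real.exp (-μ.re * (s - t))) := by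
        rw [norm_exp_neg_mul_mul]
        gcongr
        exact norm_exp_neg_mul_sub_le hμ.ne' hts hu hH
    _ ≤ Real.exp (-μ.re * (s - t)) * ‖u s‖ + H / μ.re := by
        gcongr
        exact mul_le_of_le_one_right (by positivity) (by linarith [Real.exp_pos (-μ.re * (s - t))])

theorem norm_right_le_of_linear_ode {μ : ℂ} (hμ : μ.re < 0) {u h : ℝ → ℂ} {t s H : ℝ} (hts : t ≤ s)
    (hu : ∀ x ∈ Icc t s, HasDerivAt u (μ * u x + h x) x) (hH : ∀ x ∈ Icc t s, ‖h x‖ ≤ H) :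
    ‖u s‖ ≤ Real.exp (μ.re * (s - t)) * ‖u t‖ - H / μ.re := by
  have hH0 : 0 ≤ H := (norm_nonneg _).trans (hH t ⟨le_rfl, hts⟩)
  have hbound : Real.exp (-μ.re * (s - t)) * ‖u s‖
      ≤ ‖u t‖ + H / μ.re * (1 - Real.exp (-μ.re * (s - t))) := by
    rw [← norm_exp_neg_mul_mul]
    exact (norm_le_norm_add_norm_sub' _ _).trans
      (add_le_add_right (norm_exp_neg_mul_sub_le hμ.ne hts hu hH) _)
  have hexp : Real.exp (μ.re * (s - t)) * Real.exp (-μ.re * (s - t)) = 1 := by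
    rw [← Real.exp_add, neg_mul, add_neg_cancel, Real.exp_zero]
  calc ‖u s‖ = Real.exp (μ.re * (s - t)) * (Real.exp (-μ.re * (s - t)) * ‖u s‖) := by
        rw [← mul_assoc, hexp, one_mul]
    _ ≤ Real.exp (μ.re * (s - t)) * (‖u t‖ + H / μ.re * (1 - Real.exp (-μ.re * (s - t)))) := by
        gcongr
    _ = Real.exp (μ.re * (s - t)) * ‖u t‖ + Real.exp (μ.re * (s - t)) * (H / μ.re) - H / μ.re := by
        linear_combination (-H / μ.re) * hexp
    _ ≤ Real.exp (μ.re * (s - t)) * ‖u t‖ - H / μ.re := by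
        linarith [mul_nonpos_of_nonneg_of_nonpos (Real.exp_pos (μ.re * (s - t))).le
          (div_nonpos_of_nonneg_of_nonpos hH0 hμ.le)]

theorem tendsto_exp_mul_sub_mul_atTop {a : ℝ} (ha : a < 0) (t M : ℝ) :
    Tendsto (fun s => Real.exp (a * (s - t)) * M) atTop (nhds 0) := by
  rw [← zero_mul M]
  exact (Real.tendsto_exp_atBot.comp
    ((tendsto_atTop_add_const_right _ (-t) tendsto_id).const_mul_atTop_of_neg ha)).mul_const M

theorem eventually_norm_le_of_bounded_linear_ode {μ : ℂ} (hμ : μ.re ≠ 0) {u h : ℝ → ℂ} {M H : ℝ}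
    (hH : 0 < H) (hu : ∀ᶠ t in atTop, HasDerivAt u (μ * u t + h t) t)
    (huM : ∀ᶠ t in atTop, ‖u t‖ ≤ M) (hhH : ∀ᶠ t in atTop, ‖h t‖ ≤ H) :
    ∀ᶠ t in atTop, ‖u t‖ ≤ 2 * |μ.re|⁻¹ * H := by
  obtain ⟨t₀, ht₀⟩ := eventually_atTop.1 (hu.and (huM.and hhH))
  have hpos : 0 < |μ.re|⁻¹ * H := by have := abs_pos.2 hμ; positivity
  rcases hμ.lt_or_gt with hneg | hpos'
  · filter_upwards [(tendsto_exp_mul_sub_mul_atTop hneg t₀ M).eventually_le_const hpos,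
      eventually_ge_atTop t₀] with s hs hts
    calc ‖u s‖ ≤ Real.exp (μ.re * (s - t₀)) * ‖u t₀‖ - H / μ.re :=
          norm_right_le_of_linear_ode hneg hts (fun x hx => (ht₀ x hx.1).1)
            fun x hx => (ht₀ x hx.1).2.2
      _ ≤ Real.exp (μ.re * (s - t₀)) * M - H / μ.re := by
          gcongr
          exact (ht₀ t₀ le_rfl).2.1
      _ ≤ |μ.re|⁻¹ * H - H / μ.re := by gcongr
      _ = 2 * |μ.re|⁻¹ * H := by rw [abs_of_neg hneg]; field
  · filter_upwards [eventually_ge_atTop t₀] with t ht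
    obtain ⟨s, hs, hts⟩ := ((tendsto_exp_mul_sub_mul_atTop (neg_neg_of_pos hpos') t M
      |>.eventually_le_const hpos).and (eventually_ge_atTop t)).exists
    calc ‖u t‖ ≤ Real.exp (-μ.re * (s - t)) * ‖u s‖ + H / μ.re :=
          norm_left_le_of_linear_ode hpos' hts (fun x hx => (ht₀ x (ht.trans hx.1)).1)
            fun x hx => (ht₀ x (ht.trans hx.1)).2.2
      _ ≤ Real.exp (-μ.re * (s - t)) * M + H / μ.re := by
          gcongr
          exact (ht₀ s (ht.trans hts)).2.1
      _ ≤ |μ.re|⁻¹ * H + H / μ.re := by gcongr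
      _ = 2 * |μ.re|⁻¹ * H := by rw [abs_of_pos hpos']; ring

theorem tendsto_zero_of_eventually_norm_le_half {α E : Type*} [SeminormedAddGroup E]
    {f : Filter α} {y : α → E} {M : ℝ}
    (hM : ∀ᶠ t in f, ‖y t‖ ≤ M)
    (hhalf : ∀ ρ > 0, (∀ᶠ t in f, ‖y t‖ ≤ ρ) → ∀ᶠ t in f, ‖y t‖ ≤ ρ / 2) :
    Tendsto y f (nhds 0) := by
  have hpow : ∀ k : ℕ, ∀ᶠ t in f, ‖y t‖ ≤ max M 1 * (1 / 2) ^ k := by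
    intro k
    induction k with
    | zero => simpa using hM.mono fun t ht => Or.inl ht
    | succ k ih =>
      rw [pow_succ, ← mul_assoc, mul_one_div]
      exact hhalf _ (by positivity) ih
  have hlim : Tendsto (fun k : ℕ => max M 1 * (1 / 2 : ℝ) ^ k) atTop (nhds 0) := by
    rw [← mul_zero (max M 1)]
    exact (tendsto_pow_atTop_nhds_zero_of_lt_one (by norm_num) (by norm_num)).const_mul _
  rw [NormedAddGroup.tendsto_nhds_zero]
  intro ε hε
  obtain ⟨k, hk⟩ := (hlim.eventually_lt_const hε).exists
  exact (hpow k).mono fun t ht => ht.trans_lt hk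

variable {E : Type*} [NormedAddCommGroup E] [NormedSpace ℝ E] [FiniteDimensional ℝ E]

theorem exists_eventually_norm_functional_le (A : E →L[ℝ] E)
    (hA : ∀ μ ∈ spectrum ℂ (cxEnd A), μ.re ≠ 0) (l : E →ₗ[ℝ] ℂ) :
    ∃ C, 0 < C ∧ ∀ (y g : ℝ → E) (M G : ℝ), 0 < G →
      (∀ᶠ t in atTop, HasDerivAt y (A (y t) + g t) t) → (∀ᶠ t in atTop, ‖y t‖ ≤ M) →
      (∀ᶠ t in atTop, ‖g t‖ ≤ G) → ∀ᶠ t in atTop, ‖l (y t)‖ ≤ C * G := by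
  induction l using forall_functional_of_forall_comp_sub_smul_imp A with
  | zero =>
    refine ⟨1, one_pos, fun y g M G hG _ _ _ => .of_forall fun t => ?_⟩
    simpa using hG.le
  | step μ hμ l ih =>
    obtain ⟨C, hC, ih⟩ := ih
    have hμ₀ := abs_pos.2 (hA μ hμ)
    set L := LinearMap.toContinuousLinearMap l
    refine ⟨2 * |μ.re|⁻¹ * (C + ‖L‖), by positivity, fun y g M G hG hy hM hg => ?_⟩
    have hderiv : ∀ᶠ t in atTop, HasDerivAt (fun t => l (y t))
        (μ * l (y t) + ((l ∘ₗ (A : E →ₗ[ℝ] E) - μ • l) (y t) + l (g t))) t := by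
      filter_upwards [hy] with t ht
      refine (L.hasFDerivAt.comp_hasDerivAt t ht).congr_deriv ?_
      change l (A (y t) + g t) = μ * l (y t) + (l (A (y t)) - μ * l (y t) + l (g t))
      rw [map_add]
      ring
    have hbound : ∀ᶠ t in atTop, ‖l (y t)‖ ≤ ‖L‖ * M := by
      filter_upwards [hM] with t ht
      exact L.le_opNorm_of_le ht
    have hforce : ∀ᶠ t in atTop,
        ‖(l ∘ₗ (A : E →ₗ[ℝ] E) - μ • l) (y t) + l (g t)‖ ≤ (C + ‖L‖) * G := by
      filter_upwards [ih y g M G hG hy hM hg, hg] with t hyt hgt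
      rw [add_mul]
      exact norm_add_le_of_le hyt (L.le_opNorm_of_le hgt)
    simpa only [mul_assoc] using
      eventually_norm_le_of_bounded_linear_ode (hA μ hμ) (by positivity) hderiv hbound hforce

theorem exists_eventually_norm_le (A : E →L[ℝ] E)
    (hA : ∀ μ ∈ spectrum ℂ (cxEnd A), μ.re ≠ 0) :
    ∃ C, 0 < C ∧ ∀ (y g : ℝ → E) (M G : ℝ), 0 < G →
      (∀ᶠ t in atTop, HasDerivAt y (A (y t) + g t) t) → (∀ᶠ t in atTop, ‖y t‖ ≤ M) →
      (∀ᶠ t in atTop, ‖g t‖ ≤ G) → ∀ᶠ t in atTop, ‖y t‖ ≤ C * G := by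
  obtain ⟨l, hl⟩ := exists_norm_le_sum_norm_functional E
  choose C hC hlC using fun i => exists_eventually_norm_functional_le A hA (l i)
  have hsum : 0 ≤ ∑ i, C i := Finset.sum_nonneg fun i _ => (hC i).le
  refine ⟨∑ i, C i + 1, by positivity, fun y g M G hG hy hM hg => ?_⟩
  filter_upwards [eventually_all.2 fun i => hlC i y g M G hG hy hM hg] with t ht
  calc ‖y t‖ ≤ ∑ i, ‖l i (y t)‖ := hl _
    _ ≤ ∑ i, C i * G := Finset.sum_le_sum fun i _ => ht i
    _ = (∑ i, C i) * G := by rw [Finset.sum_mul]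
    _ ≤ _ := by gcongr; linarith

theorem exists_tendsto_zero_of_norm_deriv_sub_le (A : E →L[ℝ] E)
    (hA : ∀ μ ∈ spectrum ℂ (cxEnd A), μ.re ≠ 0) :
    ∃ κ, 0 < κ ∧ ∀ (y y' : ℝ → E) (M : ℝ), (∀ᶠ t in atTop, HasDerivAt y (y' t) t) →
      (∀ᶠ t in atTop, ‖y t‖ ≤ M) → (∀ᶠ t in atTop, ‖y' t - A (y t)‖ ≤ κ * ‖y t‖) →
      Tendsto y atTop (nhds 0) := by
  obtain ⟨C, hC, hyC⟩ := exists_eventually_norm_le A hA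
  refine ⟨(2 * C)⁻¹, by positivity, fun y y' M hy hM hclose => ?_⟩
  refine tendsto_zero_of_eventually_norm_le_half hM fun ρ hρ hyρ => ?_
  have hg : ∀ᶠ t in atTop, ‖y' t - A (y t)‖ ≤ (2 * C)⁻¹ * ρ := by
    filter_upwards [hclose, hyρ] with t ht htρ
    exact ht.trans (by gcongr)
  convert hyC y (fun t => y' t - A (y t)) M _ (by positivity) (by simpa using hy) hM hg using 3
  field

end HyperbolicODE

section HyperbolicSingularity

variable {E : Type*} [NormedAddCommGroup E] [NormedSpace ℝ E] {X : E → E} {φ : ℝ → E → E} {σ : E}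

theorem eq_of_hasDerivAt_of_apply_eq_zero (hX : DifferentiableAt ℝ X σ) (hσ : X σ = 0) {x : ℝ → E}
    (hx : ∀ t, HasDerivAt x (X (x t)) t) (h0 : x 0 = σ) {t : ℝ} (ht : 0 ≤ t) : x t = σ := by
  have hcont : Continuous x := continuous_iff_continuousAt.2 fun t => (hx t).continuousAt
  have hclosed : IsClosed (x ⁻¹' {σ} ∩ Icc 0 t) :=
    (isClosed_singleton.preimage hcont).inter isClosed_Icc
  refine hclosed.Icc_subset_of_forall_mem_nhdsWithin h0 (fun s hs => ?_) ⟨ht, le_rfl⟩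
  obtain ⟨K, hK⟩ := hX.isBigO_sub.bound
  simp only [hσ, sub_zero] at hK
  have hnear : ∀ᶠ r in nhds s, ‖X (x r)‖ ≤ K * ‖x r - σ‖ := by
    have hxs : Tendsto x (nhds s) (nhds σ) := hs.1 ▸ hcont.tendsto s
    exact hxs.eventually hK
  obtain ⟨b, hsb, hb⟩ := (mem_nhdsGE_iff_exists_Icc_subset.1 (nhdsWithin_le_nhds hnear))
  refine mem_of_superset (Ioc_mem_nhdsGT hsb) fun r hr => sub_eq_zero.1 ?_
  exact eq_zero_of_abs_deriv_le_mul_abs_self_of_eq_zero_right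
    (hcont.sub continuous_const).continuousOn
    (fun u _ => ((hx u).sub_const σ).hasDerivWithinAt) (sub_eq_zero.2 hs.1)
    (fun u hu => hb (Ico_subset_Icc_self hu)) r (Ioc_subset_Icc_self hr)

theorem GeneratedBy.apply_eq_self_of_eq_zero (hgen : GeneratedBy X φ) (hX : DifferentiableAt ℝ X σ)
    (hσ : X σ = 0) (t : ℝ) : φ t σ = σ := by
  have hpos : ∀ t, 0 ≤ t → φ t σ = σ := fun t =>
    eq_of_hasDerivAt_of_apply_eq_zero hX hσ (hgen.2.2 σ) (hgen.1 σ)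
  rcases le_total 0 t with ht | ht
  · exact hpos t ht
  · calc φ t σ = φ t (φ (-t) σ) := by rw [hpos (-t) (neg_nonneg.2 ht)]
      _ = σ := by rw [← hgen.2.1, add_neg_cancel, hgen.1]

theorem spectrum_cxEnd_neg (A : E →L[ℝ] E) :
    spectrum ℂ (cxEnd (-A)) = -spectrum ℂ (cxEnd A) := by
  have hneg : cxEnd (-A) = -cxEnd A := LinearMap.baseChange_neg _
  rw [hneg, spectrum.neg_eq]

variable [FiniteDimensional ℝ E]

theorem exists_tendsto_of_eventually_dist_le {A : E →L[ℝ] E} (hX : HasFDerivAt X A σ)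
    (hσ : X σ = 0) (hA : ∀ μ ∈ spectrum ℂ (cxEnd A), μ.re ≠ 0) :
    ∃ ε, 0 < ε ∧ ∀ x : ℝ → E, (∀ᶠ t in atTop, HasDerivAt x (X (x t)) t) →
      (∀ᶠ t in atTop, dist (x t) σ ≤ ε) → Tendsto x atTop (nhds σ) := by
  obtain ⟨κ, hκ, hconv⟩ := exists_tendsto_zero_of_norm_deriv_sub_le A hA
  have hlin := hX.isLittleO.def hκ
  simp only [hσ, sub_zero] at hlin
  obtain ⟨ε, hε, hball⟩ := nhds_basis_closedBall.eventually_iff.1 hlin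
  refine ⟨ε, hε, fun x hx hxε => ?_⟩
  refine tendsto_sub_nhds_zero_iff.1 (hconv (fun t => x t - σ) (fun t => X (x t)) ε ?_ ?_ ?_)
  · exact hx.mono fun t ht => ht.sub_const σ
  · simpa only [dist_eq_norm] using hxε
  · exact hxε.mono fun t ht => hball ht

theorem HypSing.exists_forall_dist_le_imp_mem_wuPoint (hσ : HypSing X σ)
    (hX : DifferentiableAt ℝ X σ) (hgen : GeneratedBy X φ) :
    ∃ ε, 0 < ε ∧ ∀ z, (∀ t ≤ 0, dist (φ t z) σ ≤ ε) → z ∈ WuPoint φ σ := by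
  have hspec : ∀ μ ∈ spectrum ℂ (cxEnd (-fderiv ℝ X σ)), μ.re ≠ 0 := by
    intro μ hμ
    rw [spectrum_cxEnd_neg] at hμ
    simpa using hσ.2 (-μ) hμ
  obtain ⟨ε, hε, hconv⟩ :=
    exists_tendsto_of_eventually_dist_le hX.hasFDerivAt.neg (by simp [hσ.1]) hspec
  refine ⟨ε, hε, fun z hz => ?_⟩
  have hrev : ∀ t, HasDerivAt (fun t => φ (-t) z) (-X (φ (-t) z)) t := fun t => by
    simpa [Function.comp_def] using (hgen.2.2 z (-t)).scomp t (hasDerivAt_neg t)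
  have hlim : Tendsto (fun t => φ (-t) z) atTop (nhds σ) :=
    hconv _ (.of_forall hrev) ((eventually_ge_atTop 0).mono fun t ht => hz _ (neg_nonpos.2 ht))
  simpa [WuPoint, Function.comp_def] using hlim.comp tendsto_neg_atBot_atTop

end HyperbolicSingularity

section SimpleEigenvalueOne

open Module.End

variable {E : Type*} [NormedAddCommGroup E] [NormedSpace ℝ E] {B : E →L[ℝ] E} {v : E}

theorem cxEnd_tmul (B : E →L[ℝ] E) (c : ℂ) (x : E) : cxEnd B (c ⊗ₜ x) = c ⊗ₜ B x :=
  LinearMap.baseChange_tmul _ _ _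

theorem mem_maxGenEigenspace_cxEnd_one_of_apply_sub_eq {x : E} (hv : B v = v)
    (hx : B x - x = v) : (1 : ℂ) ⊗ₜ[ℝ] x ∈ maxGenEigenspace (cxEnd B) 1 := by
  refine mem_maxGenEigenspace _ _ _ |>.2 ⟨2, ?_⟩
  simp [pow_two, cxEnd_tmul, ← tmul_sub, hx, hv]

theorem exists_eq_tmul_of_mem_maxGenEigenspace_one
    (hsimple : Module.finrank ℂ (maxGenEigenspace (cxEnd B) 1) = 1) (hv₀ : v ≠ 0) (hv : B v = v)
    {w : ℂ ⊗[ℝ] E} (hw : w ∈ maxGenEigenspace (cxEnd B) 1) : ∃ c : ℂ, w = c ⊗ₜ v := by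
  have hmem : (1 : ℂ) ⊗ₜ[ℝ] v ∈ maxGenEigenspace (cxEnd B) 1 :=
    eigenspace_le_maxGenEigenspace (mem_eigenspace_iff.2 (by simp [cxEnd_tmul, hv]))
  have hne : (⟨1 ⊗ₜ v, hmem⟩ : maxGenEigenspace (cxEnd B) 1) ≠ 0 := fun h =>
    hv₀ ((Module.FaithfullyFlat.one_tmul_eq_zero_iff ℝ E v).1 (congrArg Subtype.val h))
  obtain ⟨c, hc⟩ := (finrank_eq_one_iff_of_nonzero' _ hne).1 hsimple ⟨w, hw⟩
  refine ⟨c, ?_⟩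
  simpa [smul_tmul'] using (congrArg Subtype.val hc).symm

theorem exists_dual_apply_eq_one_of_simple [FiniteDimensional ℝ E]
    (hsimple : Module.finrank ℂ (maxGenEigenspace (cxEnd B) 1) = 1) (hv₀ : v ≠ 0) (hv : B v = v) :
    ∃ l : E →L[ℝ] ℝ, l v = 1 ∧ ∀ x, l (B x) = l x := by
  have hrange : v ∉ LinearMap.range (B - 1 : E →ₗ[ℝ] E) := by
    rintro ⟨x, hx⟩
    have hx : B x - x = v := hx
    obtain ⟨c, hc⟩ := exists_eq_tmul_of_mem_maxGenEigenspace_one hsimple hv₀ hv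
      (mem_maxGenEigenspace_cxEnd_one_of_apply_sub_eq hv hx)
    refine hv₀ ((Module.FaithfullyFlat.one_tmul_eq_zero_iff ℝ E (A := ℂ) v).1 ?_)
    rw [← hx, tmul_sub, ← cxEnd_tmul, hc, cxEnd_tmul, hv, sub_self]
  obtain ⟨f, hfv, hf⟩ := Submodule.exists_le_ker_of_notMem hrange
  refine ⟨LinearMap.toContinuousLinearMap ((f v)⁻¹ • f), by simp [hfv], fun x => ?_⟩
  have : f (B x - x) = 0 := hf ⟨x, rfl⟩
  simp [sub_eq_zero.1 ((map_sub f _ _).symm.trans this)]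

theorem norm_ne_one_of_mem_spectrum_cxEnd_sub_smulRight [FiniteDimensional ℝ E]
    (hB : ∀ μ ∈ spectrum ℂ (cxEnd B), μ = 1 ∨ ‖μ‖ ≠ 1)
    (hsimple : Module.finrank ℂ (maxGenEigenspace (cxEnd B) 1) = 1) (hv₀ : v ≠ 0) (hv : B v = v)
    {l : E →L[ℝ] ℝ} (hlv : l v = 1) (hlB : ∀ x, l (B x) = l x) {μ : ℂ}
    (hμ : μ ∈ spectrum ℂ (cxEnd (B - l.smulRight v))) : ‖μ‖ ≠ 1 := by
  intro hμ₁
  let L : ℂ ⊗[ℝ] E →ₗ[ℂ] ℂ := (Complex.ofRealCLM.comp l).toLinearMap.liftBaseChange ℂ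
  have hLB : ∀ w, L (cxEnd B w) = L w := by
    refine LinearMap.congr_fun (f := L ∘ₗ cxEnd B) (g := L) ?_
    ext x
    simp [L, cxEnd_tmul, hlB]
  have hdefl : ∀ w, cxEnd (B - l.smulRight v) w = cxEnd B w - L w ⊗ₜ v := by
    intro w
    induction w with
    | zero => simp
    | add w₁ w₂ h₁ h₂ => rw [map_add, h₁, h₂, map_add, map_add, add_tmul]; abel
    | tmul c x => simp [L, cxEnd_tmul, tmul_sub, tmul_smul, smul_tmul', mul_comm]
  obtain ⟨w, hw, hw₀⟩ := (hasEigenvalue_iff_mem_spectrum.2 hμ).exists_hasEigenvector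
  rw [mem_eigenspace_iff, hdefl] at hw
  have hLw : L w = 0 := by
    have h : μ * L w = 0 := by
      have hLv : L (L w ⊗ₜ v) = L w := by simp [L, hlv]
      rw [← smul_eq_mul, ← map_smul, ← hw, map_sub, hLB, hLv, sub_self]
    exact (mul_eq_zero.1 h).resolve_left (norm_ne_zero_iff.1 (by simp [hμ₁]))
  rw [hLw, zero_tmul, sub_zero] at hw
  have hμB : μ ∈ spectrum ℂ (cxEnd B) :=
    (hasEigenvalue_of_hasEigenvector ⟨mem_eigenspace_iff.2 hw, hw₀⟩).mem_spectrum
  obtain rfl : μ = 1 := (hB μ hμB).resolve_right (not_not.2 hμ₁)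
  obtain ⟨c, rfl⟩ := exists_eq_tmul_of_mem_maxGenEigenspace_one hsimple hv₀ hv
    (eigenspace_le_maxGenEigenspace (mem_eigenspace_iff.2 hw))
  have hc : c = 0 := by simpa [L, hlv] using hLw
  exact hw₀ (by rw [hc, zero_tmul])

end SimpleEigenvalueOne

section HyperbolicPeriodicOrbit

variable {E : Type*} [NormedAddCommGroup E] [NormedSpace ℝ E] {X : E → E} {φ : ℝ → E → E} {q : E}
  {T : ℝ}

theorem differentiableAt_of_maxGenEigenspace_fderiv_one_ne_bot {f : E → E}
    (hf : Module.End.maxGenEigenspace (cxEnd (fderiv ℝ f q)) 1 ≠ ⊥) : DifferentiableAt ℝ f q := by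
  contrapose! hf
  -- `fderiv` takes the junk value `0` here, and `0` has no generalized eigenvector for `1`.
  have hzero : cxEnd (fderiv ℝ f q) = 0 := by
    rw [fderiv_zero_of_not_differentiableAt hf]
    exact LinearMap.baseChange_zero
  rw [hzero, eq_bot_iff]
  intro w hw
  obtain ⟨k, hk⟩ := (Module.End.mem_maxGenEigenspace _ _ _).1 hw
  rw [one_smul, zero_sub] at hk
  rcases neg_one_pow_eq_or (Module.End ℂ (ℂ ⊗[ℝ] E)) k with h | h <;> simpa [h] using hk

theorem GeneratedBy.fderiv_apply_self_of_apply_eq (hgen : GeneratedBy X φ) (hq : φ T q = q)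
    (hdiff : DifferentiableAt ℝ (φ T) q) : fderiv ℝ (φ T) q (X q) = X q := by
  have horbit : HasDerivAt (fun s => φ s q) (X q) 0 := by simpa [hgen.1] using hgen.2.2 q 0
  have himage : HasDerivAt (fun s => φ T (φ s q)) (fderiv ℝ (φ T) q (X q)) 0 := by
    refine HasFDerivAt.comp_hasDerivAt 0 ?_ horbit
    simpa [hgen.1] using hdiff.hasFDerivAt
  have hcommute : (fun s => φ T (φ s q)) = fun s => φ s q := by
    ext s
    rw [← hgen.2.1, add_comm, hgen.2.1, hq]
  rw [hcommute] at himage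
  exact himage.unique horbit

theorem GeneratedBy.eventually_norm_sub_smul_le (hgen : GeneratedBy X φ) (hflow : IsFlow φ)
    (hX : ContinuousAt X q) {δ : ℝ} (hδ : 0 < δ) :
    ∀ᶠ p : ℝ × E in nhds (0, q), ‖φ p.1 p.2 - p.2 - p.1 • X q‖ ≤ δ * |p.1| := by
  have hflow0 : Tendsto (fun p : ℝ × E => φ p.1 p.2) (nhds (0, q)) (nhds q) := by
    simpa [hgen.1] using hflow.1.tendsto (0, q)
  have hclose : ∀ᶠ p : ℝ × E in nhds (0, q), ‖X (φ p.1 p.2) - X q‖ ≤ δ := by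
    simpa [dist_eq_norm] using
      (hX.tendsto.comp hflow0).eventually (closedBall_mem_nhds (X q) hδ)
  obtain ⟨r, hr, hball⟩ := nhds_basis_closedBall.eventually_iff.1 hclose
  filter_upwards [closedBall_mem_nhds (0, q) hr] with ⟨s, x⟩ hsx
  rw [← closedBall_prod_same, mem_prod] at hsx
  have hmvt := (convex_closedBall (0 : ℝ) r).norm_image_sub_le_of_norm_hasDerivWithin_le
    (f := fun t => φ t x - t • X q) (f' := fun t => X (φ t x) - X q) (C := δ)
    (fun t _ => (((hgen.2.2 x t).sub ((hasDerivAt_id t).smul_const (X q))).congr_deriv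
      (by simp)).hasDerivWithinAt)
    (fun t ht => hball (x := (t, x)) (by
      rw [← closedBall_prod_same]
      exact ⟨ht, hsx.2⟩))
    (mem_closedBall_self hr.le) hsx.1
  simpa [hgen.1, sub_right_comm] using hmvt

theorem eventually_exists_abs_le_apply_eq {Y : Type*} [TopologicalSpace Y] {F : ℝ × Y → ℝ} {y : Y}
    {F' η : ℝ} (hF : Continuous F) (hderiv : HasDerivAt (fun s => F (s, y)) F' 0) (hF' : 0 < F')
    (hη : 0 < η) : ∀ᶠ x in nhds y, ∃ s, |s| ≤ η ∧ F (s, x) = F (0, y) := by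
  have hsign : ∀ᶠ s in nhds (0 : ℝ), SignType.sign (F (s, y) - F (0, y)) = SignType.sign s := by
    have hF'₀ : 0 < deriv (fun s => F (s, y) - F (0, y)) 0 := by
      rwa [(hderiv.sub_const _).deriv]
    simpa using eventually_nhdsWithin_sign_eq_of_deriv_pos hF'₀ (sub_self _)
  obtain ⟨r, hr, hball⟩ :=
    nhds_basis_closedBall.eventually_iff.1 (hsign.and (closedBall_mem_nhds 0 hη))
  simp only [Real.closedBall_eq_Icc, zero_sub, zero_add] at hball
  have hneg : F (-r, y) < F (0, y) := by
    have h := (hball (left_mem_Icc.2 (by linarith))).1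
    rwa [sign_neg (neg_neg_of_pos hr), sign_eq_neg_one_iff, sub_neg] at h
  have hpos : F (0, y) < F (r, y) := by
    have h := (hball (right_mem_Icc.2 (by linarith))).1
    rwa [sign_pos hr, sign_eq_one_iff, sub_pos] at h
  filter_upwards [(hF.comp (.prodMk_right (-r))).continuousAt.eventually_lt_const hneg,
    (hF.comp (.prodMk_right r)).continuousAt.eventually_const_lt hpos] with x hxneg hxpos
  obtain ⟨s, hs, hsF⟩ := intermediate_value_Icc (by linarith : -r ≤ r)
    (hF.comp (.prodMk_left x)).continuousOn ⟨hxneg.le, hxpos.le⟩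
  exact ⟨s, by simpa using (hball hs).2, hsF⟩

theorem GeneratedBy.eventually_exists_section_time (hgen : GeneratedBy X φ) (hflow : IsFlow φ)
    {l : E →L[ℝ] ℝ} (hl : 0 < l (X q)) {η : ℝ} (hη : 0 < η) :
    ∀ᶠ x in nhds q, ∃ s, |s| ≤ η ∧ dist (φ s x) q ≤ η ∧ l (φ s x) = l q := by
  have horbit : HasDerivAt (fun s => φ s q) (X q) 0 := by simpa [hgen.1] using hgen.2.2 q 0
  have hflow0 : Tendsto (fun p : ℝ × E => φ p.1 p.2) (nhds (0, q)) (nhds q) := by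
    simpa [hgen.1] using hflow.1.tendsto (0, q)
  obtain ⟨r, hr, hball⟩ := nhds_basis_closedBall.eventually_iff.1
    (hflow0.eventually (closedBall_mem_nhds q hη))
  have hsection := eventually_exists_abs_le_apply_eq (F := fun p : ℝ × E => l (φ p.1 p.2))
    (l.continuous.comp hflow.1) (l.hasFDerivAt.comp_hasDerivAt 0 horbit) hl (lt_min hη hr)
  filter_upwards [hsection, closedBall_mem_nhds q hr] with x ⟨s, hs, hsl⟩ hx
  refine ⟨s, hs.trans (min_le_left _ _), hball (x := (s, x)) ?_, by simpa [hgen.1] using hsl⟩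
  rw [← closedBall_prod_same]
  exact ⟨by simpa using hs.trans (min_le_right _ _), hx⟩

theorem exists_abs_le_and_norm_le_of_map_add_smul_add_eq_zero {l : E →L[ℝ] ℝ} {v : E}
    (hlv : l v = 1) : ∃ δ Q, 0 < δ ∧ 0 < Q ∧ ∀ (τ : ℝ) (a b : E), ‖b‖ ≤ δ * |τ| →
      l (a + τ • v + b) = 0 → |τ| ≤ Q * ‖a‖ ∧ ‖a + τ • v + b‖ ≤ Q * ‖a‖ := by
  set δ : ℝ := (2 * (‖l‖ + 1))⁻¹ with hδ
  have hδ₀ : 0 < δ := by positivity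
  have hlδ : ‖l‖ * δ ≤ 1 / 2 := by
    rw [hδ, ← div_eq_mul_inv, div_le_div_iff₀ (by positivity) two_pos]
    linarith
  refine ⟨δ, 2 * ‖l‖ * (‖v‖ + δ + 1) + 1, hδ₀, by positivity, fun τ a b hb hzero => ?_⟩
  have hτ : |τ| ≤ 2 * ‖l‖ * ‖a‖ := by
    have hτab : τ = -(l a + l b) := by
      simp only [map_add, map_smul, hlv, smul_eq_mul, mul_one] at hzero
      linarith
    have : |τ| ≤ ‖l‖ * ‖a‖ + 1 / 2 * |τ| := calc
      |τ| ≤ ‖l a‖ + ‖l b‖ := by rw [hτab, abs_neg]; exact norm_add_le (l a) (l b)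
      _ ≤ ‖l‖ * ‖a‖ + ‖l‖ * (δ * |τ|) :=
        add_le_add (l.le_opNorm a) ((l.le_opNorm b).trans (by gcongr))
      _ ≤ ‖l‖ * ‖a‖ + 1 / 2 * |τ| := by rw [← mul_assoc]; gcongr
    linarith
  have hla : 0 ≤ 2 * ‖l‖ * ‖a‖ := by positivity
  have hlva : 0 ≤ 2 * ‖l‖ * ‖a‖ * (‖v‖ + δ) := by positivity
  refine ⟨by linarith [norm_nonneg a], ?_⟩
  calc ‖a + τ • v + b‖
      ≤ ‖a‖ + |τ| * ‖v‖ + δ * |τ| :=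
        norm_add₃_le.trans (by rw [norm_smul, Real.norm_eq_abs]; gcongr)
    _ = ‖a‖ + |τ| * (‖v‖ + δ) := by ring
    _ ≤ ‖a‖ + 2 * ‖l‖ * ‖a‖ * (‖v‖ + δ) := by gcongr
    _ ≤ (2 * ‖l‖ * (‖v‖ + δ + 1) + 1) * ‖a‖ := by linarith

theorem GeneratedBy.eventually_return_map_le (hgen : GeneratedBy X φ) (hflow : IsFlow φ)
    (hX : ContinuousAt X q) (hq : φ T q = q) (hdiff : DifferentiableAt ℝ (φ T) q)
    {l : E →L[ℝ] ℝ} (hlv : l (X q) = 1) (hlB : ∀ x, l (fderiv ℝ (φ T) q x) = l x)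
    {κ : ℝ} (hκ : 0 < κ) :
    ∀ᶠ p : ℝ × E in nhds (0, q), l p.2 = l q → l (φ (p.1 + T) p.2) = l q →
      |p.1| ≤ κ * ‖p.2 - q‖ ∧
        ‖φ (p.1 + T) p.2 - q - fderiv ℝ (φ T) q (p.2 - q)‖ ≤ κ * ‖p.2 - q‖ := by
  obtain ⟨δ, Q, hδ, hQ, hest⟩ := exists_abs_le_and_norm_le_of_map_add_smul_add_eq_zero hlv
  set B := fderiv ℝ (φ T) q
  have happrox : ∀ᶠ p : ℝ × E in nhds (0, q),
      ‖φ T p.2 - q - B (p.2 - q)‖ ≤ κ / Q * ‖p.2 - q‖ := by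
    have h := hdiff.hasFDerivAt.isLittleO.def (div_pos hκ hQ)
    rw [hq] at h
    exact (continuous_snd.tendsto (0, q)).eventually h
  have hbox : ∀ᶠ p : ℝ × E in nhds (0, q),
      ‖φ p.1 (φ T p.2) - φ T p.2 - p.1 • X q‖ ≤ δ * |p.1| := by
    have hcont : Continuous fun p : ℝ × E => (p.1, φ T p.2) :=
      continuous_fst.prodMk ((hflow.1.comp (.prodMk_right T)).comp continuous_snd)
    have hlim := hcont.tendsto (0, q)
    rw [hq] at hlim
    exact hlim.eventually (hgen.eventually_norm_sub_smul_le hflow hX hδ)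
  filter_upwards [happrox, hbox] with ⟨τ, x⟩ ha hb hx hτx
  have hsplit : φ T x - q - B (x - q) + τ • X q + (φ τ (φ T x) - φ T x - τ • X q) =
      φ (τ + T) x - q - B (x - q) := by
    rw [hflow.2.2]
    abel
  have hzero : l (φ (τ + T) x - q - B (x - q)) = 0 := by
    rw [map_sub, map_sub, hlB, map_sub, hτx, hx, sub_self]
  have haQ : Q * ‖φ T x - q - B (x - q)‖ ≤ κ * ‖x - q‖ := by
    rwa [div_mul_eq_mul_div, le_div_iff₀' hQ] at ha
  have hτ := hest τ _ _ hb (hsplit ▸ hzero)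
  rw [hsplit] at hτ
  exact ⟨hτ.1.trans haQ, hτ.2.trans haQ⟩

theorem GeneratedBy.exists_summable_section_times [FiniteDimensional ℝ E]
    (hgen : GeneratedBy X φ) (hflow : IsFlow φ) (hX : ContinuousAt X q) (hXq : X q ≠ 0)
    (hq : φ T q = q) (hdiff : DifferentiableAt ℝ (φ T) q)
    (hB : ∀ μ ∈ spectrum ℂ (cxEnd (fderiv ℝ (φ T) q)), μ = 1 ∨ ‖μ‖ ≠ 1)
    (hsimple : Module.finrank ℂ
      (Module.End.maxGenEigenspace (cxEnd (fderiv ℝ (φ T) q)) 1) = 1) :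
    ∃ ε, 0 < ε ∧ ∀ z, (∀ n : ℕ, dist (φ (n * T) z) q ≤ ε) → ∃ s : ℕ → ℝ,
      (Summable fun n => ‖φ (s n) (φ (n * T) z) - q‖) ∧ Summable fun n => |s (n + 1) - s n| := by
  have hv := hgen.fderiv_apply_self_of_apply_eq hq hdiff
  obtain ⟨l, hlv, hlB⟩ := exists_dual_apply_eq_one_of_simple hsimple hXq hv
  obtain ⟨κ, hκ, hsummable⟩ := exists_summable_norm_of_norm_sub_le
    (fderiv ℝ (φ T) q - l.smulRight (X q))
    fun μ hμ => norm_ne_one_of_mem_spectrum_cxEnd_sub_smulRight hB hsimple hXq hv hlv hlB hμ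
  obtain ⟨r, hr, hreturn⟩ := nhds_basis_closedBall.eventually_iff.1
    (hgen.eventually_return_map_le hflow hX hq hdiff hlv hlB hκ)
  obtain ⟨ε, hε, hsection⟩ := nhds_basis_closedBall.eventually_iff.1
    (hgen.eventually_exists_section_time hflow (hlv ▸ one_pos) (half_pos hr))
  refine ⟨ε, hε, fun z hz => ?_⟩
  choose s hs hsq hsl using fun n => hsection (mem_closedBall.2 (hz n))
  have hstep : ∀ n, φ (s (n + 1)) (φ ((n + 1 : ℕ) * T) z) =
      φ (s (n + 1) - s n + T) (φ (s n) (φ (n * T) z)) := fun n => by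
    simp only [← hflow.2.2]
    congr 1
    push_cast
    ring
  have hmem : ∀ n, (s (n + 1) - s n, φ (s n) (φ (n * T) z)) ∈ closedBall (0, q) r := fun n => by
    rw [← closedBall_prod_same, mem_prod, mem_closedBall_zero_iff]
    exact ⟨(norm_sub_le_of_le (hs (n + 1)) (hs n)).trans_eq (add_halves r),
      (hsq n).trans (half_le_self hr.le)⟩
  have hest := fun n => hreturn (hmem n) (hsl n) (hstep n ▸ hsl (n + 1))
  have hsum : Summable fun n => ‖φ (s n) (φ (n * T) z) - q‖ := by
    refine hsummable _ ⟨r / 2, fun n => (dist_eq_norm _ q).symm.trans_le (hsq n)⟩ fun n => ?_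
    rw [hstep]
    simpa [hsl] using (hest n).2
  exact ⟨s, hsum, (hsum.mul_left κ).of_nonneg_of_le (fun n => abs_nonneg _) fun n => (hest n).1⟩

theorem HypPeriodic.exists_forall_dist_le_imp_mem_wsOrb [FiniteDimensional ℝ E]
    (hq : HypPeriodic X φ q) (hX : ContinuousAt X q) (hgen : GeneratedBy X φ) (hflow : IsFlow φ) :
    ∃ ε, 0 < ε ∧ ∀ z, (∀ t ≥ 0, dist (φ t z) (φ t q) ≤ ε) → z ∈ WsOrb φ q := by
  obtain ⟨hXq, T, hT, hqT, hB, hsimple⟩ := hq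
  have hdiff : DifferentiableAt ℝ (φ T) q :=
    differentiableAt_of_maxGenEigenspace_fderiv_one_ne_bot fun h => by
      rw [h, finrank_bot] at hsimple
      exact zero_ne_one hsimple
  obtain ⟨ε, hε, hsection⟩ :=
    hgen.exists_summable_section_times hflow hX hXq hqT hdiff hB hsimple
  refine ⟨ε, hε, fun z hz => ?_⟩
  obtain ⟨s, hsum, hs⟩ := hsection z fun n => by
    simpa [hflow.apply_nat_mul_eq_self hqT] using hz (n * T) (by positivity)
  obtain ⟨S, hS⟩ := hflow.exists_tendsto_nat_mul_of_summable hs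
    (tendsto_iff_norm_sub_tendsto_zero.2 hsum.tendsto_atTop_zero)
  have hwss : φ S z ∈ Wss φ (φ 0 q) := by
    rw [hflow.2.1]
    exact hflow.mem_wss_of_tendsto_nat_mul hT hqT hS
  exact hflow.mem_wsOrb_of_apply_mem (mem_iUnion.2 ⟨0, hwss⟩)

end HyperbolicPeriodicOrbit

section Shadowing

variable {M : Type*} [MetricSpace M] [ProperSpace M] {φ : ℝ → M → M} {Λ : Set M} {x y : M} {ε : ℝ}

theorem WeakSpec.exists_dist_le_of_backward_of_forward (hspec : WeakSpec φ Λ) (hflow : IsFlow φ)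
    (hx : ∀ t ≤ 0, φ t x ∈ Λ) (hy : y ∈ Λ) (hε : 0 < ε) :
    ∃ z K, (∀ t ≤ 0, dist (φ t z) (φ t x) ≤ ε) ∧ ∀ t ≥ 0, dist (φ (t + K) z) (φ t y) ≤ ε := by
  obtain ⟨hcont, hφ0, hφadd⟩ := hflow
  obtain ⟨K, -, hKspec⟩ := hspec ε hε
  let F : ℕ → Set M := fun n => {z | ∀ t ∈ Icc (0 : ℝ) n,
    dist (φ (-t) z) (φ (-t) x) ≤ ε ∧ dist (φ (t + K) z) (φ t y) ≤ ε}
  have hanti : ∀ n, F (n + 1) ⊆ F n := fun n z hz t ht =>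
    hz t ⟨ht.1, ht.2.trans (by simp)⟩
  have hnonempty : ∀ n, (F n).Nonempty := by
    intro n
    obtain ⟨z, -, hzx, hzy⟩ := hKspec (-n) 0 K (K + n) (by simp) (by simp) (by simp)
      (φ (-n) x) (hx _ (by simp)) y hy
    refine ⟨z, fun t ht => ⟨?_, ?_⟩⟩
    · have := hzx (-t) ⟨neg_le_neg ht.2, neg_nonpos.2 ht.1⟩
      rw [← hφadd, sub_add_cancel] at this
      exact this.le
    · have := hzy (t + K) ⟨le_add_of_nonneg_left ht.1, by linarith [ht.2]⟩
      rw [add_sub_cancel_right] at this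
      exact this.le
  have hclosed : ∀ n, IsClosed (F n) := fun n => by
    have hφ : ∀ t, Continuous (φ t) := fun t => hcont.comp (.prodMk_right t)
    simp only [F, ofPred_forall, ofPred_and]
    exact isClosed_biInter fun t _ =>
      (isClosed_le ((hφ _).dist continuous_const) continuous_const).inter
        (isClosed_le ((hφ _).dist continuous_const) continuous_const)
  have hcompact : IsCompact (F 0) :=
    (isCompact_closedBall x ε).of_isClosed_subset (hclosed 0) fun z hz => by
      simpa [hφ0] using (hz 0 (by simp)).1
  obtain ⟨z, hz⟩ := IsCompact.nonempty_iInter_of_sequence_nonempty_isCompact_isClosed F hanti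
    hnonempty hcompact hclosed
  have hz' : ∀ t, 0 ≤ t → dist (φ (-t) z) (φ (-t) x) ≤ ε ∧ dist (φ (t + K) z) (φ t y) ≤ ε :=
    fun t ht => mem_iInter.1 hz ⌈t⌉₊ t ⟨ht, Nat.le_ceil t⟩
  exact ⟨z, K, fun t ht => by simpa using (hz' (-t) (neg_nonneg.2 ht)).1, fun t ht => (hz' t ht).2⟩

end Shadowing

theorem unstable_of_singularity_meets_stable_of_periodic_general
    {E : Type*} [NormedAddCommGroup E] [NormedSpace ℝ E] [FiniteDimensional ℝ E]
    {X : E → E} {φ : ℝ → E → E} (hflow : IsFlow φ) (hgen : GeneratedBy X φ)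
    {Λ : Set E} (hspec : WeakSpec φ Λ) {σ q : E} (hσΛ : σ ∈ Λ) (hqΛ : q ∈ Λ)
    (hXσ : DifferentiableAt ℝ X σ) (hXq : ContinuousAt X q)
    (hσ : HypSing X σ) (hq : HypPeriodic X φ q) :
    (WuPoint φ σ ∩ WsOrb φ q).Nonempty := by
  have : ProperSpace E := FiniteDimensional.proper ℝ E
  obtain ⟨ε₁, hε₁, hunstable⟩ := hσ.exists_forall_dist_le_imp_mem_wuPoint hXσ hgen
  obtain ⟨ε₂, hε₂, hstable⟩ := hq.exists_forall_dist_le_imp_mem_wsOrb hXq hgen hflow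
  have hfix : ∀ t, φ t σ = σ := hgen.apply_eq_self_of_eq_zero hXσ hσ.1
  obtain ⟨z, K, hzσ, hzq⟩ := hspec.exists_dist_le_of_backward_of_forward hflow
    (fun t _ => (hfix t).symm ▸ hσΛ) hqΛ (lt_min hε₁ hε₂)
  refine ⟨z, hunstable z fun t ht => ?_, hflow.mem_wsOrb_of_apply_mem (s := K) ?_⟩
  · simpa only [hfix] using (hzσ t ht).trans (min_le_left _ _)
  · refine hstable _ fun t ht => ?_
    simpa only [hflow.2.2] using (hzq t ht).trans (min_le_right _ _)

/-- If a compact invariant set `Λ` has the weak specification property and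
contains a hyperbolic singularity `σ` and a hyperbolic periodic orbit `O(q)`, then
`W^u(σ) ∩ W^s(O(q)) ≠ ∅`. -/
theorem unstable_of_singularity_meets_stable_of_periodic
    {E : Type*} [NormedAddCommGroup E] [NormedSpace ℝ E] [FiniteDimensional ℝ E]
    (X : E → E) (φ : ℝ → E → E) (hX : ContDiff ℝ 1 X)
    (hflow : IsFlow φ) (hgen : GeneratedBy X φ)
    (Λ : Set E) (hΛc : IsCompact Λ) (hΛi : InvariantSet φ Λ) (hspec : WeakSpec φ Λ)
    (σ q : E) (hσΛ : σ ∈ Λ) (hqΛ : q ∈ Λ)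
    (hσ : HypSing X σ) (hq : HypPeriodic X φ q) :
    (WuPoint φ σ ∩ WsOrb φ q).Nonempty :=
  unstable_of_singularity_meets_stable_of_periodic_general hflow hgen hspec hσΛ hqΛ
    (hX.differentiable one_ne_zero σ) hX.continuous.continuousAt hσ hq
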